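/- For α ∈ (0,1], λ > 0, t ≥ 0, the coefficients p_k(t) = ((-1)^k / k!) ∑_{r=0}^∞ ((-λ^α t)^r / r!) · Γ(αr+1)/Γ(αr+1-k) satisfy ∑_{k=0}^∞ p_k(t) u^k = exp(-λ^α t (1-u)^α) for all u ∈ [0,1], where Γ(αr+1)/Γ(αr+1-k) is interpreted as the falling-factorial product αr(αr-1)⋯(αr-k+1). -/

import Mathlib

open Real Finset

/-!
Write `c = -λ ^ α * t`. On the open unit disk `(1 - u) ^ (α * r)` is the sum of its binomial series,
so expanding the exponential in `exp (c * (1 - u) ^ α)` gives a double series whose sums in the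
other order are `p k * u ^ k`. Both the exchange of the sums and the boundary of the disk rest on
`∑' k, ‖choose α k‖ < ∞`, which holds for `0 < α.re` because `k * ‖choose α k‖` decreases by at
least `α.re / 2 * ‖choose α k‖` at each late step. Vandermonde's identity makes
`a ↦ ∑' k, ‖choose a k‖` submultiplicative, so row `r` of the double series has norm sum at most
`(‖c‖ * ∑' k, ‖choose α k‖) ^ r / r!`.
-/

open scoped Nat

theorem summable_of_eventually_le_sub_succ {f g : ℕ → ℝ} (hf : ∀ k, 0 ≤ f k) (hg : ∀ k, 0 ≤ g k)
    (h : ∀ᶠ k in Filter.atTop, f k ≤ g k - g (k + 1)) : Summable f := by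
  obtain ⟨N, hN⟩ := Filter.eventually_atTop.1 h
  refine (summable_nat_add_iff N).1
    (summable_of_sum_range_le (c := g N) (fun k ↦ hf (k + N)) fun n ↦ ?_)
  calc ∑ k ∈ range n, f (k + N)
      ≤ ∑ k ∈ range n, (g (k + N) - g (k + 1 + N)) := by
        refine sum_le_sum fun k _ ↦ ?_
        rw [add_right_comm]
        exact hN _ (Nat.le_add_left N k)
    _ = g N - g (n + N) := by rw [sum_range_sub' fun k ↦ g (k + N), zero_add]
    _ ≤ g N := sub_le_self _ (hg _)

theorem norm_mul_pow_le_of_norm_le_one {R : Type*} [NormedDivisionRing R] {x : R} (b : R)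
    (hx : ‖x‖ ≤ 1) (k : ℕ) : ‖b * x ^ k‖ ≤ ‖b‖ := by
  rw [norm_mul, norm_pow]
  exact mul_le_of_le_one_right (norm_nonneg _) (pow_le_one₀ (norm_nonneg _) hx)

theorem tsum_norm_sum_mul_antidiagonal_le {R : Type*} [NormedRing R] {f g : ℕ → R}
    (hf : Summable (‖f ·‖)) (hg : Summable (‖g ·‖)) :
    ∑' n, ‖∑ kl ∈ antidiagonal n, f kl.1 * g kl.2‖ ≤ (∑' n, ‖f n‖) * ∑' n, ‖g n‖ := by
  have hmul : Summable fun kl : ℕ × ℕ ↦ ‖f kl.1‖ * ‖g kl.2‖ :=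
    hf.mul_of_nonneg hg (fun _ ↦ norm_nonneg _) fun _ ↦ norm_nonneg _
  have hle (n : ℕ) : ‖∑ kl ∈ antidiagonal n, f kl.1 * g kl.2‖ ≤
      ∑ kl ∈ antidiagonal n, ‖f kl.1‖ * ‖g kl.2‖ :=
    norm_sum_le_of_le _ fun kl _ ↦ norm_mul_le (f kl.1) (g kl.2)
  calc ∑' n, ‖∑ kl ∈ antidiagonal n, f kl.1 * g kl.2‖
      ≤ ∑' n, ∑ kl ∈ antidiagonal n, ‖f kl.1‖ * ‖g kl.2‖ :=
        (summable_norm_sum_mul_antidiagonal_of_summable_norm hf hg).tsum_le_tsum hle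
          (summable_sum_mul_antidiagonal_of_summable_mul (f := (‖f ·‖)) (g := (‖g ·‖)) hmul)
    _ = (∑' n, ‖f n‖) * ∑' n, ‖g n‖ :=
        (hf.tsum_mul_tsum_eq_tsum_sum_antidiagonal hg hmul).symm

section ExponentialMajorant

variable {𝕜 ι : Type*} [RCLike 𝕜] {g : ℕ → ι → 𝕜} {C : ℝ}

theorem summable_pow_div_factorial_mul (hg : ∀ r, Summable (‖g r ·‖))
    (hC : ∀ r, ∑' i, ‖g r i‖ ≤ C ^ r) (c : 𝕜) :
    Summable fun p : ℕ × ι ↦ c ^ p.1 / p.1 ! * g p.1 p.2 := by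
  refine .of_norm ((summable_prod_of_nonneg fun _ ↦ norm_nonneg _).2 ⟨fun r ↦ ?_, ?_⟩)
  · simpa only [norm_mul] using (hg r).mul_left ‖c ^ r / (r ! : 𝕜)‖
  · refine .of_nonneg_of_le (fun _ ↦ tsum_nonneg fun _ ↦ norm_nonneg _) (fun r ↦ ?_)
      (Real.summable_pow_div_factorial (‖c‖ * C))
    calc ∑' i, ‖c ^ r / (r ! : 𝕜) * g r i‖
        = ‖c‖ ^ r / r ! * ∑' i, ‖g r i‖ := by
          simp only [norm_mul, norm_div, norm_pow, RCLike.norm_natCast, tsum_mul_left]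
      _ ≤ ‖c‖ ^ r / r ! * C ^ r := by gcongr; exact hC r
      _ = (‖c‖ * C) ^ r / r ! := by rw [mul_pow, div_mul_eq_mul_div]

theorem hasSum_tsum_pow_div_factorial_mul (hg : ∀ r, Summable (‖g r ·‖))
    (hC : ∀ r, ∑' i, ‖g r i‖ ≤ C ^ r) {v : 𝕜} (hv : ∀ r, HasSum (g r) (v ^ r)) (c : 𝕜) :
    HasSum (fun i ↦ ∑' r : ℕ, c ^ r / r ! * g r i) (NormedSpace.exp (c * v)) := by
  have hsum := summable_pow_div_factorial_mul hg hC c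
  have hrow (r : ℕ) : HasSum (fun i ↦ c ^ r / r ! * g r i) ((c * v) ^ r / r !) := by
    rw [mul_pow, ← div_mul_eq_mul_div]
    exact (hv r).mul_left _
  have htotal : ∑' p : ℕ × ι, c ^ p.1 / p.1 ! * g p.1 p.2 = NormedSpace.exp (c * v) :=
    (hsum.hasSum.prod_fiberwise hrow).unique (NormedSpace.expSeries_div_hasSum_exp (c * v))
  rw [← htotal, ← (Equiv.prodComm ι ℕ).tsum_eq]
  exact hsum.prod_symm.hasSum.prod_fiberwise fun i ↦ (hsum.prod_symm.prod_factor i).hasSum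

end ExponentialMajorant

section ChooseNorm

variable {R : Type*} [NormedRing R] [BinomialRing R] {a b : R}

theorem summable_norm_choose_add (hab : Commute a b) (ha : Summable (‖Ring.choose a ·‖))
    (hb : Summable (‖Ring.choose b ·‖)) : Summable (‖Ring.choose (a + b) ·‖) := by
  simpa only [Ring.add_choose_eq _ hab] using
    summable_norm_sum_mul_antidiagonal_of_summable_norm ha hb

theorem tsum_norm_choose_add_le (hab : Commute a b) (ha : Summable (‖Ring.choose a ·‖))
    (hb : Summable (‖Ring.choose b ·‖)) :
    ∑' k, ‖Ring.choose (a + b) k‖ ≤ (∑' k, ‖Ring.choose a k‖) * ∑' k, ‖Ring.choose b k‖ := by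
  simpa only [Ring.add_choose_eq _ hab] using tsum_norm_sum_mul_antidiagonal_le ha hb

theorem hasSum_norm_choose_zero : HasSum (‖Ring.choose (0 : R) ·‖) ‖(1 : R)‖ := by
  simpa [Ring.choose_zero_ite] using
    hasSum_single (f := (‖Ring.choose (0 : R) ·‖)) 0 fun k hk ↦ by simp [Ring.choose_zero_ite, hk]

theorem summable_norm_choose_nsmul (ha : Summable (‖Ring.choose a ·‖)) (n : ℕ) :
    Summable (‖Ring.choose (n • a) ·‖) := by
  induction n with
  | zero => simpa only [zero_nsmul] using hasSum_norm_choose_zero.summable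
  | succ n ih =>
    simpa only [succ_nsmul] using summable_norm_choose_add ((Commute.refl a).smul_left n) ih ha

theorem tsum_norm_choose_nsmul_le [NormOneClass R] (ha : Summable (‖Ring.choose a ·‖)) (n : ℕ) :
    ∑' k, ‖Ring.choose (n • a) k‖ ≤ (∑' k, ‖Ring.choose a k‖) ^ n := by
  induction n with
  | zero => simp only [zero_nsmul, hasSum_norm_choose_zero.tsum_eq, norm_one, pow_zero, le_refl]
  | succ n ih =>
    rw [succ_nsmul, pow_succ]
    refine (tsum_norm_choose_add_le ((Commute.refl a).smul_left n)
      (summable_norm_choose_nsmul ha n) ha).trans ?_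
    gcongr

end ChooseNorm

section ChooseField

variable {K : Type*} [Field K] [CharZero K]

theorem choose_eq_prod_range_div_factorial (a : K) (k : ℕ) :
    Ring.choose a k = (∏ i ∈ range k, (a - i)) / k ! := by
  rw [Ring.choose_eq_smul, smul_eq_mul, inv_mul_eq_div, ← descPochhammer_eval_eq_prod_range,
    ← Polynomial.aeval_eq_smeval, Polynomial.aeval_def, ← Polynomial.eval_map, descPochhammer_map]

theorem succ_mul_choose_succ (a : K) (k : ℕ) :
    (k + 1) * Ring.choose a (k + 1) = (a - k) * Ring.choose a k := by
  rw [choose_eq_prod_range_div_factorial, choose_eq_prod_range_div_factorial, prod_range_succ,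
    Nat.factorial_succ]
  have := Nat.cast_add_one_ne_zero (R := K) k
  push_cast
  field_simp

end ChooseField

section ComplexBinomialSeries

variable {a x : ℂ}

theorem eventually_norm_sub_natCast_le (ha : 0 < a.re) :
    ∀ᶠ k : ℕ in Filter.atTop, ‖a - k‖ ≤ k - a.re / 2 := by
  filter_upwards [Filter.eventually_ge_atTop ⌈‖a‖ ^ 2 / a.re⌉₊] with k hk
  have hka : ‖a‖ ^ 2 ≤ k * a.re := (div_le_iff₀ ha).1 (Nat.ceil_le.1 hk)
  have hre_sq : a.re ^ 2 ≤ ‖a‖ ^ 2 := sq_le_sq' (neg_le_of_abs_le (Complex.abs_re_le_norm a))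
    (Complex.re_le_norm a)
  have hre : a.re ≤ k := le_of_mul_le_mul_right (by linarith) ha
  refine le_of_sq_le_sq ?_ (by linarith)
  calc ‖a - k‖ ^ 2 = ‖a‖ ^ 2 - 2 * (k * a.re) + k ^ 2 := by
        simp only [Complex.sq_norm, Complex.normSq_apply, Complex.sub_re, Complex.sub_im,
          Complex.natCast_re, Complex.natCast_im]
        ring
    _ ≤ (k - a.re / 2) ^ 2 := by linarith [sq_nonneg (a.re / 2), sub_sq (k : ℝ) (a.re / 2)]

theorem summable_norm_choose (ha : 0 < a.re) : Summable (‖Ring.choose a ·‖) := by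
  have hscaled : Summable fun k ↦ a.re / 2 * ‖Ring.choose a k‖ := by
    refine summable_of_eventually_le_sub_succ (g := fun k ↦ k * ‖Ring.choose a k‖)
      (fun k ↦ by positivity) (fun k ↦ by positivity) ?_
    filter_upwards [eventually_norm_sub_natCast_le ha] with k hk
    have hrec : ((k + 1 : ℕ) : ℝ) * ‖Ring.choose a (k + 1)‖ = ‖a - k‖ * ‖Ring.choose a k‖ := by
      rw [← norm_mul, ← succ_mul_choose_succ, norm_mul, ← Nat.cast_succ, RCLike.norm_natCast]
    rw [hrec, ← sub_mul]
    gcongr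
    linarith
  exact (summable_mul_left_iff (by positivity)).1 hscaled

theorem hasSum_choose_mul_pow_of_norm_lt_one (a : ℂ) (hx : ‖x‖ < 1) :
    HasSum (fun k ↦ Ring.choose a k * x ^ k) ((1 + x) ^ a) := by
  have hball : x ∈ Metric.eball (0 : ℂ) 1 := by
    rw [← ENNReal.ofReal_one, Metric.eball_ofReal]
    simpa using hx
  simpa only [binomialSeries_apply, List.ofFn_const, List.prod_replicate, smul_eq_mul, zero_add]
    using (Complex.one_add_cpow_hasFPowerSeriesOnBall_zero (a := a)).hasSum hball

theorem continuousOn_one_add_cpow_closedBall (ha : 0 < a.re) :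
    ContinuousOn (fun x : ℂ ↦ (1 + x) ^ a) (Metric.closedBall 0 1) := fun x hx ↦ by
  have hre : 0 ≤ (1 + x).re := by
    have := (abs_le.1 ((Complex.abs_re_le_norm x).trans (mem_closedBall_zero_iff.1 hx))).1
    rw [Complex.add_re, Complex.one_re]
    linarith
  exact ((Complex.continuousAt_cpow_const_of_re_pos (.inl hre) ha).comp
    (f := fun x ↦ 1 + x) (by fun_prop)).continuousWithinAt

theorem hasSum_choose_mul_pow (ha : 0 < a.re) (hx : ‖x‖ ≤ 1) :
    HasSum (fun k ↦ Ring.choose a k * x ^ k) ((1 + x) ^ a) := by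
  have hle (k : ℕ) (y : ℂ) (hy : y ∈ Metric.closedBall 0 1) :
      ‖Ring.choose a k * y ^ k‖ ≤ ‖Ring.choose a k‖ :=
    norm_mul_pow_le_of_norm_le_one _ (mem_closedBall_zero_iff.1 hy) k
  have hx' : x ∈ Metric.closedBall 0 1 := mem_closedBall_zero_iff.2 hx
  have hcont : ContinuousOn (fun y : ℂ ↦ ∑' k, Ring.choose a k * y ^ k) (Metric.closedBall 0 1) :=
    continuousOn_tsum (fun k ↦ by fun_prop) (summable_norm_choose ha) hle
  have hball : Set.EqOn (fun y : ℂ ↦ ∑' k, Ring.choose a k * y ^ k) (fun y ↦ (1 + y) ^ a)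
      (Metric.ball 0 1) := fun y hy ↦
    (hasSum_choose_mul_pow_of_norm_lt_one a (mem_ball_zero_iff.1 hy)).tsum_eq
  have htsum : ∑' k, Ring.choose a k * x ^ k = (1 + x) ^ a :=
    hball.of_subset_closure hcont (continuousOn_one_add_cpow_closedBall ha)
      Metric.ball_subset_closedBall (closure_ball (0 : ℂ) one_ne_zero).ge hx'
  rw [← htsum]
  exact (Summable.of_norm_bounded (summable_norm_choose ha) fun k ↦ hle k x hx').hasSum

theorem hasSum_choose_nsmul_mul_pow (ha : 0 < a.re) (hx : ‖x‖ ≤ 1) (n : ℕ) :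
    HasSum (fun k ↦ Ring.choose (n • a) k * x ^ k) (((1 + x) ^ a) ^ n) := by
  rw [← Complex.cpow_nat_mul, ← nsmul_eq_mul]
  rcases n.eq_zero_or_pos with rfl | hn
  · simpa [Ring.choose_zero_ite] using
      hasSum_single (f := fun k ↦ Ring.choose (0 : ℂ) k * x ^ k) 0
        fun k hk ↦ by simp [Ring.choose_zero_ite, hk]
  · exact hasSum_choose_mul_pow (by simpa using mul_pos (Nat.cast_pos.2 hn) ha) hx

theorem hasSum_tsum_pow_div_factorial_mul_choose (c : ℂ) (ha : 0 < a.re) (hx : ‖x‖ ≤ 1) :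
    HasSum (fun k ↦ ∑' r : ℕ, c ^ r / r ! * (Ring.choose (r • a) k * x ^ k))
      (Complex.exp (c * (1 + x) ^ a)) := by
  have hchoose := summable_norm_choose ha
  have hle (r k : ℕ) := norm_mul_pow_le_of_norm_le_one (Ring.choose (r • a) k) hx k
  have hrow (r : ℕ) : Summable fun k ↦ ‖Ring.choose (r • a) k * x ^ k‖ :=
    .of_nonneg_of_le (fun _ ↦ norm_nonneg _) (hle r) (summable_norm_choose_nsmul hchoose r)
  rw [Complex.exp_eq_exp_ℂ]
  refine hasSum_tsum_pow_div_factorial_mul (C := ∑' k, ‖Ring.choose a k‖) hrow (fun r ↦ ?_)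
    (hasSum_choose_nsmul_mul_pow ha hx) c
  exact ((hrow r).tsum_le_tsum (hle r) (summable_norm_choose_nsmul hchoose r)).trans
    (tsum_norm_choose_nsmul_le hchoose r)

end ComplexBinomialSeries

theorem stmt6_general (α c : ℂ) (hα : 0 < α.re) (p : ℕ → ℂ)
    (hp : ∀ k : ℕ, p k = ((-1 : ℂ) ^ k / k !) *
      ∑' r : ℕ, c ^ r / r ! * ∏ i ∈ range k, (α * r - i)) (u : ℂ) (hu : ‖u‖ ≤ 1) :
    HasSum (fun k ↦ p k * u ^ k) (Complex.exp (c * (1 - u) ^ α)) := by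
  rw [sub_eq_add_neg]
  refine (hasSum_tsum_pow_div_factorial_mul_choose c hα (by rwa [norm_neg])).congr_fun fun k ↦ ?_
  rw [hp k, ← tsum_mul_left, ← tsum_mul_right]
  refine tsum_congr fun r ↦ ?_
  rw [choose_eq_prod_range_div_factorial, nsmul_eq_mul, mul_comm (r : ℂ), neg_pow u]
  ring

/-- State probabilities of the space-fractional Poisson process: with
`p k t = ((-1)^k/k!) ∑_r ((-λ^α t)^r/r!) · αr(αr-1)⋯(αr-k+1)`, one has
`∑_k p k t · u^k = exp(-λ^α t (1-u)^α)` for `u ∈ [0,1]`. -/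
theorem stmt6 (α lam t : ℝ) (hα : 0 < α ∧ α ≤ 1) (hlam : 0 < lam) (ht : 0 ≤ t)
    (p : ℕ → ℝ)
    (hp : ∀ k : ℕ, p k = ((-1 : ℝ) ^ k / k.factorial) *
      ∑' r : ℕ, ((-(lam ^ α * t)) ^ r / r.factorial) *
        ∏ i ∈ Finset.range k, (α * r - i)) :
    ∀ u : ℝ, 0 ≤ u → u ≤ 1 →
      ∑' k : ℕ, p k * u ^ k = Real.exp (-(lam ^ α) * t * (1 - u) ^ α) := by
  intro u hu0 hu1
  have h := (stmt6_general α (-(lam ^ α * t) : ℝ) (by simpa using hα.1) (fun k ↦ p k)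
    (fun k ↦ by rw [hp k]; push_cast; rfl) u (by simpa [abs_of_nonneg hu0])).tsum_eq
  rw [← Complex.ofReal_one, ← Complex.ofReal_sub, ← Complex.ofReal_cpow (sub_nonneg.2 hu1)] at h
  rw [neg_mul]
  exact_mod_cast h
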